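/- arXiv:1709.02546 — 5 statements merged into one kernel-verified Lean document; each statement's English description precedes it below -/
import Mathlib

section
/- Let n ≥ 2 and let f : Γ₊ → ℝ be smooth, symmetric, strictly positive, strictly increasing in each argument (∂f/∂x_i > 0 on Γ₊ for every i) and positively homogeneous of degree one. Then f is inverse concave (i.e. the dual function f_* is concave on Γ₊) if and only if for every x ∈ Γ₊ and every y ∈ ℝⁿ one has Σ_{i,j} (∂²f/∂x_i∂x_j)(x) y_i y_j + 2 Σ_i ((∂f/∂x_i)(x)/x_i) y_i² ≥ 0, i.e. the matrix (f̈^{ij}(x) + 2 ḟ^i(x) x_i^{-1} δ_{ij}) is positive semidefinite at every x ∈ Γ₊. -/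
open Filter Topology Matrix

noncomputable section

/-- The open positive cone Γ₊ ⊂ ℝⁿ. -/
def posCone (n : ℕ) : Set (Fin n → ℝ) := {x | ∀ i, 0 < x i}

/-- The dual function f_*(x) = f(x₁⁻¹,…,xₙ⁻¹)⁻¹. -/
def dualF (n : ℕ) (f : (Fin n → ℝ) → ℝ) : (Fin n → ℝ) → ℝ :=
  fun x => (f fun i => (x i)⁻¹)⁻¹

/-- First partial derivative ḟ^i(x) = ∂f/∂x_i(x). -/
def D1 (n : ℕ) (f : (Fin n → ℝ) → ℝ) (x : Fin n → ℝ) (i : Fin n) : ℝ :=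
  fderiv ℝ f x (Pi.single i 1)

/-- Second partial derivative f̈^{ij}(x) = ∂²f/∂x_i∂x_j(x). -/
def D2 (n : ℕ) (f : (Fin n → ℝ) → ℝ) (x : Fin n → ℝ) (i j : Fin n) : ℝ :=
  fderiv ℝ (fun y => fderiv ℝ f y (Pi.single i 1)) x (Pi.single j 1)

/-!
Let `g x = f (x⁻¹)`, so that `f_* = 1 / g`. Where `f_*` is concave, its reciprocal `g` is convex.
Conversely, if `g` is convex then `{1 ≤ f_*} = {g ≤ 1}` is convex, and a positive function which is
homogeneous of degree one is concave as soon as this one superlevel set is convex. Hence `f` is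
inverse concave iff `g` is convex iff `D²g ≥ 0`, and the chain rule gives
`D²g(x)(v, v) = ∑ f̈^{ij}(u) y_i y_j + 2 ∑ ḟ^i(u) y_i² / u_i` with `u = x⁻¹` and `y = -u² v`.
-/

section Homogeneous

variable {𝕜 E : Type*} [Field 𝕜] [LinearOrder 𝕜] [IsStrictOrderedRing 𝕜]
  [AddCommMonoid E] [Module 𝕜 E] {s : Set E} {h : E → 𝕜}

theorem concaveOn_of_homogeneous_of_convex_one_le
    (hs : ∀ k : 𝕜, 0 < k → ∀ x ∈ s, k • x ∈ s) (hpos : ∀ x ∈ s, 0 < h x)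
    (hhom : ∀ k : 𝕜, 0 < k → ∀ x ∈ s, h (k • x) = k * h x)
    (hconv : Convex 𝕜 {x ∈ s | 1 ≤ h x}) : ConcaveOn 𝕜 s h := by
  have normalize : ∀ x ∈ s, (h x)⁻¹ • x ∈ {x ∈ s | 1 ≤ h x} := fun x hx =>
    have hk := inv_pos.2 (hpos x hx)
    ⟨hs _ hk x hx, by rw [hhom _ hk x hx, inv_mul_cancel₀ (hpos x hx).ne']⟩
  have mem_and_le : ∀ x ∈ s, ∀ y ∈ s, ∀ a b : 𝕜, 0 ≤ a → 0 ≤ b → a + b = 1 →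
      a • x + b • y ∈ s ∧ a * h x + b * h y ≤ h (a • x + b • y) := by
    intro x hx y hy a b ha hb hab
    have hx₀ := hpos x hx
    have hy₀ := hpos y hy
    set m := a * h x + b * h y
    have hm : 0 < m := convex_Ioi (0 : 𝕜) hx₀ hy₀ ha hb hab
    set z := (a * h x / m) • (h x)⁻¹ • x + (b * h y / m) • (h y)⁻¹ • y
    obtain ⟨hz, hz₁⟩ : z ∈ {x ∈ s | 1 ≤ h x} :=
      hconv (normalize x hx) (normalize y hy) (by positivity) (by positivity)
        (by rw [← add_div, div_self hm.ne'])
    have hmz : a • x + b • y = m • z := by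
      simp only [z, smul_add, smul_smul]
      congr 2 <;> field_simp
    rw [hmz, hhom m hm z hz]
    exact ⟨hs m hm z hz, le_mul_of_one_le_right hm.le hz₁⟩
  exact ⟨fun x hx y hy a b ha hb hab => (mem_and_le x hx y hy a b ha hb hab).1,
    fun x hx y hy a b ha hb hab => (mem_and_le x hx y hy a b ha hb hab).2⟩

theorem convexOn_inv_of_concaveOn (hpos : ∀ x ∈ s, 0 < h x) (hh : ConcaveOn 𝕜 s h) :
    ConvexOn 𝕜 s fun x => (h x)⁻¹ := by
  refine ⟨hh.1, fun x hx y hy a b ha hb hab => ?_⟩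
  have hx₀ := hpos x hx
  have hy₀ := hpos y hy
  calc (h (a • x + b • y))⁻¹
      ≤ (a • h x + b • h y)⁻¹ :=
        inv_anti₀ (convex_Ioi (0 : 𝕜) hx₀ hy₀ ha hb hab) (hh.2 hx hy ha hb hab)
    _ ≤ a • (h x)⁻¹ + b • (h y)⁻¹ := by
        simpa only [_root_.zpow_neg_one] using
          (convexOn_zpow (𝕜 := 𝕜) (-1)).2 hx₀ hy₀ ha hb hab

theorem concaveOn_iff_convexOn_inv_of_homogeneous
    (hs : ∀ k : 𝕜, 0 < k → ∀ x ∈ s, k • x ∈ s) (hpos : ∀ x ∈ s, 0 < h x)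
    (hhom : ∀ k : 𝕜, 0 < k → ∀ x ∈ s, h (k • x) = k * h x) :
    ConcaveOn 𝕜 s h ↔ ConvexOn 𝕜 s fun x => (h x)⁻¹ := by
  refine ⟨convexOn_inv_of_concaveOn hpos, fun hinv =>
    concaveOn_of_homogeneous_of_convex_one_le hs hpos hhom ?_⟩
  have hset : {x ∈ s | 1 ≤ h x} = {x ∈ s | (h x)⁻¹ ≤ 1} :=
    Set.ext fun x => and_congr_right fun hx => (inv_le_one₀ (hpos x hx)).symm
  rw [hset]
  exact hinv.convex_le 1

end Homogeneous

section SecondFDeriv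

variable {𝕜 E F : Type*} [NontriviallyNormedField 𝕜] [NormedAddCommGroup E] [NormedSpace 𝕜 E]
  [NormedAddCommGroup F] [NormedSpace 𝕜 F] {f : E → F} {x y : E} {t : 𝕜}

theorem hasFDerivAt_fderiv_of_contDiffAt_two (hf : ContDiffAt 𝕜 2 f x) :
    HasFDerivAt (fderiv 𝕜 f) (fderiv 𝕜 (fderiv 𝕜 f) x) x :=
  ((hf.fderiv_right (m := 1) (by norm_num)).differentiableAt one_ne_zero).hasFDerivAt

theorem fderiv_fderiv_apply (hf : ContDiffAt 𝕜 2 f x) (v w : E) :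
    fderiv 𝕜 (fun z => fderiv 𝕜 f z v) x w = fderiv 𝕜 (fderiv 𝕜 f) x w v := by
  have h := (hasFDerivAt_fderiv_of_contDiffAt_two hf).clm_apply (hasFDerivAt_const v x)
  simp [h.fderiv]

theorem hasDerivAt_comp_lineMap (hf : DifferentiableAt 𝕜 f (AffineMap.lineMap x y t)) :
    HasDerivAt (f ∘ AffineMap.lineMap x y) (fderiv 𝕜 f (AffineMap.lineMap x y t) (y - x)) t :=
  hf.hasFDerivAt.comp_hasDerivAt t AffineMap.hasDerivAt_lineMap

theorem hasDerivAt_fderiv_lineMap_apply (hf : ContDiffAt 𝕜 2 f (AffineMap.lineMap x y t)) :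
    HasDerivAt (fun t : 𝕜 => fderiv 𝕜 f (AffineMap.lineMap x y t) (y - x))
      (fderiv 𝕜 (fderiv 𝕜 f) (AffineMap.lineMap x y t) (y - x) (y - x)) t := by
  have h := (hasFDerivAt_fderiv_of_contDiffAt_two hf).comp_hasDerivAt t AffineMap.hasDerivAt_lineMap
  simpa using h.clm_apply (hasDerivAt_const t (y - x))

end SecondFDeriv

section SecondDerivativeTest

variable {E : Type*} [NormedAddCommGroup E] [NormedSpace ℝ E] {s : Set E} {f : E → ℝ}

theorem fderiv_fderiv_nonneg_of_convexOn (hs : IsOpen s) (hf : ContDiffOn ℝ 2 f s)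
    (hconv : ConvexOn ℝ s f) {x : E} (hx : x ∈ s) (v : E) :
    0 ≤ fderiv ℝ (fderiv ℝ f) x v v := by
  set l : ℝ →ᵃ[ℝ] E := AffineMap.lineMap x (x + v)
  have hT : IsOpen (l ⁻¹' s) := hs.preimage AffineMap.lineMap_continuous
  have h0 : (0 : ℝ) ∈ l ⁻¹' s := by simpa [l] using hx
  have hcd : ∀ t ∈ l ⁻¹' s, ContDiffAt ℝ 2 f (l t) := fun t ht =>
    hf.contDiffAt (hs.mem_nhds ht)
  have hd : ∀ t ∈ l ⁻¹' s, HasDerivAt (f ∘ l) (fderiv ℝ f (l t) (x + v - x)) t := fun t ht =>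
    hasDerivAt_comp_lineMap ((hcd t ht).differentiableAt two_ne_zero)
  have hmono : MonotoneOn (fun t => fderiv ℝ f (l t) (x + v - x)) (l ⁻¹' s) :=
    ((hconv.comp_affineMap l).monotoneOn_deriv fun t ht => (hd t ht).differentiableAt).congr
      fun t ht => (hd t ht).deriv
  have hnonneg := hmono.derivWithin_nonneg (x := 0)
  rw [derivWithin_of_isOpen hT h0, (hasDerivAt_fderiv_lineMap_apply (hcd 0 h0)).deriv] at hnonneg
  simpa [l] using hnonneg

theorem convexOn_of_convexOn_comp_lineMap (hs : Convex ℝ s)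
    (h : ∀ x ∈ s, ∀ y ∈ s, ConvexOn ℝ (AffineMap.lineMap x y ⁻¹' s)
      (f ∘ (AffineMap.lineMap x y : ℝ →ᵃ[ℝ] E))) : ConvexOn ℝ s f := by
  refine ⟨hs, fun x hx y hy a b ha hb hab => ?_⟩
  have hxy := (h x hx y hy).2 (x := 0) (y := 1) (by simpa using hx) (by simpa using hy) ha hb hab
  obtain rfl : a = 1 - b := eq_sub_of_add_eq hab
  simpa [AffineMap.lineMap_apply_module] using hxy

theorem convexOn_of_fderiv_fderiv_nonneg (hs : IsOpen s) (hs' : Convex ℝ s)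
    (hf : ContDiffOn ℝ 2 f s) (h : ∀ x ∈ s, ∀ v, 0 ≤ fderiv ℝ (fderiv ℝ f) x v v) :
    ConvexOn ℝ s f := by
  refine convexOn_of_convexOn_comp_lineMap hs' fun x _ y _ => ?_
  set l : ℝ →ᵃ[ℝ] E := AffineMap.lineMap x y
  have hcd : ∀ t ∈ l ⁻¹' s, ContDiffAt ℝ 2 f (l t) := fun t ht =>
    hf.contDiffAt (hs.mem_nhds ht)
  have hd : ∀ t ∈ l ⁻¹' s, HasDerivAt (f ∘ l) (fderiv ℝ f (l t) (y - x)) t := fun t ht =>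
    hasDerivAt_comp_lineMap ((hcd t ht).differentiableAt two_ne_zero)
  exact convexOn_of_hasDerivWithinAt2_nonneg (hs'.affine_preimage l)
    (fun t ht => (hd t ht).continuousAt.continuousWithinAt)
    (fun t ht => (hd t (interior_subset ht)).hasDerivWithinAt)
    (fun t ht => (hasDerivAt_fderiv_lineMap_apply (hcd t (interior_subset ht))).hasDerivWithinAt)
    fun t ht => h (l t) (interior_subset ht : t ∈ l ⁻¹' s) (y - x)

theorem convexOn_iff_fderiv_fderiv_nonneg (hs : IsOpen s) (hs' : Convex ℝ s)
    (hf : ContDiffOn ℝ 2 f s) :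
    ConvexOn ℝ s f ↔ ∀ x ∈ s, ∀ v, 0 ≤ fderiv ℝ (fderiv ℝ f) x v v :=
  ⟨fun h _ hx => fderiv_fderiv_nonneg_of_convexOn hs hf h hx,
    convexOn_of_fderiv_fderiv_nonneg hs hs' hf⟩

end SecondDerivativeTest

section Inversion

variable {𝕜 ι F : Type*} [NontriviallyNormedField 𝕜] [Fintype ι] [NormedAddCommGroup F]
  [NormedSpace 𝕜 F] {x : ι → 𝕜}

theorem hasFDerivAt_pi_inv (hx : ∀ i, x i ≠ 0) :
    HasFDerivAt (fun z : ι → 𝕜 => z⁻¹) (-ContinuousLinearMap.mul 𝕜 (ι → 𝕜) (x⁻¹ ^ 2)) x := by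
  refine hasFDerivAt_pi'' fun i => ?_
  refine ((hasDerivAt_inv (hx i)).comp_hasFDerivAt x (hasFDerivAt_apply i x)).congr_fderiv ?_
  ext v
  simp

theorem contDiffAt_pi_inv {m : WithTop ℕ∞} (hx : ∀ i, x i ≠ 0) :
    ContDiffAt 𝕜 m (fun z : ι → 𝕜 => z⁻¹) x :=
  contDiffAt_pi.2 fun i => (contDiff_apply 𝕜 𝕜 i).contDiffAt.inv (hx i)

theorem hasFDerivAt_comp_pi_inv {f : (ι → 𝕜) → F} (hf : DifferentiableAt 𝕜 f x⁻¹)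
    (hx : ∀ i, x i ≠ 0) :
    HasFDerivAt (fun z => f z⁻¹)
      (fderiv 𝕜 f x⁻¹ ∘L (-ContinuousLinearMap.mul 𝕜 (ι → 𝕜) (x⁻¹ ^ 2))) x :=
  hf.hasFDerivAt.comp x (hasFDerivAt_pi_inv hx)

theorem hasFDerivAt_neg_inv_sq_mul (hx : ∀ i, x i ≠ 0) (v : ι → 𝕜) :
    HasFDerivAt (fun z : ι → 𝕜 => -(z⁻¹ ^ 2 * v))
      ((2 : 𝕜) • ContinuousLinearMap.mul 𝕜 (ι → 𝕜) (x⁻¹ ^ 3 * v)) x := by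
  refine (((hasFDerivAt_pi_inv hx).pow 2).mul_const v).fun_neg.congr_fderiv ?_
  ext w i
  simp only [Nat.add_one_sub_one, pow_one, nsmul_eq_mul, Nat.cast_ofNat, inv_pow, smul_neg,
    neg_neg, _root_.smul_apply, ContinuousLinearMap.mul_apply', smul_eq_mul, Pi.smul_apply',
    Pi.mul_apply, Pi.ofNat_apply, Pi.inv_apply, Pi.pow_apply, Pi.smul_apply]
  ring

end Inversion

section InverseConcavityForm

variable {ι : Type*} [Fintype ι] {f : (ι → ℝ) → ℝ} {x : ι → ℝ}

/-- The quadratic form `∑ f̈^{ij}(x) y_i y_j + 2 ∑ (ḟ^i(x) / x_i) y_i²` whose positivity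
characterises inverse concavity, written with Fréchet derivatives; `y ^ 2 / x` is taken
coordinatewise. -/
def inverseConcavityForm (f : (ι → ℝ) → ℝ) (x y : ι → ℝ) : ℝ :=
  fderiv ℝ (fderiv ℝ f) x y y + 2 * fderiv ℝ f x (y ^ 2 / x)

theorem fderiv_fderiv_comp_pi_inv (hf : ContDiffAt ℝ 2 f x⁻¹) (hx : ∀ i, x i ≠ 0) (v : ι → ℝ) :
    fderiv ℝ (fderiv ℝ fun z => f z⁻¹) x v v =
      inverseConcavityForm f x⁻¹ (-(x⁻¹ ^ 2 * v)) := by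
  have hinv : ContDiffAt ℝ 2 (fun z : ι → ℝ => z⁻¹) x := contDiffAt_pi_inv hx
  have hg : ContDiffAt ℝ 2 (fun z => f z⁻¹) x := hf.comp x hinv
  have hfirst : (fun z => fderiv ℝ (fun z => f z⁻¹) z v) =ᶠ[𝓝 x]
      fun z => fderiv ℝ f z⁻¹ (-(z⁻¹ ^ 2 * v)) := by
    have hne : ∀ᶠ z in 𝓝 x, ∀ i, z i ≠ 0 :=
      eventually_all.2 fun i => (continuous_apply i).continuousAt.eventually_ne (hx i)
    have hdiff : ∀ᶠ z in 𝓝 x, ContDiffAt ℝ 2 f z⁻¹ :=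
      hinv.continuousAt.eventually (hf.eventually (by simp))
    filter_upwards [hne, hdiff] with z hz hfz
    simp [(hasFDerivAt_comp_pi_inv (hfz.differentiableAt two_ne_zero) hz).fderiv]
  have hgradient : HasFDerivAt (fun z => fderiv ℝ f z⁻¹) _ x :=
    (hasFDerivAt_fderiv_of_contDiffAt_two hf).comp x (hasFDerivAt_pi_inv hx)
  rw [← fderiv_fderiv_apply hg, hfirst.fderiv_eq,
    (hgradient.clm_apply (hasFDerivAt_neg_inv_sq_mul hx v)).fderiv]
  have hquot : (-(x⁻¹ ^ 2 * v)) ^ 2 / x⁻¹ = x⁻¹ ^ 3 * v * v := by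
    ext i
    have := hx i
    simp only [Pi.div_apply, Pi.pow_apply, Pi.neg_apply, Pi.mul_apply, Pi.inv_apply]
    field_simp
  rw [inverseConcavityForm, hquot]
  simp [add_comm]

end InverseConcavityForm

section PositiveCone

variable {n : ℕ} {f : (Fin n → ℝ) → ℝ} {x : Fin n → ℝ}

theorem posCone_eq_pi : posCone n = Set.univ.pi fun _ => Set.Ioi 0 := by
  ext x
  simp [posCone]

theorem isOpen_posCone : IsOpen (posCone n) :=
  posCone_eq_pi ▸ isOpen_set_pi Set.finite_univ fun _ _ => isOpen_Ioi

theorem convex_posCone : Convex ℝ (posCone n) :=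
  posCone_eq_pi ▸ convex_pi fun _ _ => convex_Ioi 0

theorem smul_mem_posCone {k : ℝ} (hk : 0 < k) (hx : x ∈ posCone n) : k • x ∈ posCone n :=
  fun i => mul_pos hk (hx i)

theorem inv_mem_posCone (hx : x ∈ posCone n) : x⁻¹ ∈ posCone n :=
  fun i => inv_pos.2 (hx i)

theorem contDiffOn_comp_inv_posCone {m : WithTop ℕ∞} (hf : ContDiffOn ℝ m f (posCone n)) :
    ContDiffOn ℝ m (fun x => f x⁻¹) (posCone n) :=
  hf.comp (fun _ hx => (contDiffAt_pi_inv fun i => (hx i).ne').contDiffWithinAt)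
    fun _ => inv_mem_posCone

theorem dualF_smul (hhom : ∀ k : ℝ, 0 < k → ∀ x ∈ posCone n, f (k • x) = k * f x) {k : ℝ}
    (hk : 0 < k) (hx : x ∈ posCone n) : dualF n f (k • x) = k * dualF n f x := by
  have hkx : (fun i => ((k • x) i)⁻¹) = k⁻¹ • x⁻¹ := by
    ext i
    simp [mul_comm]
  rw [dualF, hkx, hhom k⁻¹ (inv_pos.2 hk) _ (inv_mem_posCone hx), mul_inv, inv_inv]
  rfl

theorem concaveOn_dualF_iff_convexOn_comp_inv (hpos : ∀ x ∈ posCone n, 0 < f x)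
    (hhom : ∀ k : ℝ, 0 < k → ∀ x ∈ posCone n, f (k • x) = k * f x) :
    ConcaveOn ℝ (posCone n) (dualF n f) ↔ ConvexOn ℝ (posCone n) fun x => f x⁻¹ := by
  have hdual : (fun x => (dualF n f x)⁻¹) = fun x => f x⁻¹ := funext fun _ => inv_inv _
  rw [concaveOn_iff_convexOn_inv_of_homogeneous (h := dualF n f) (fun _ hk _ => smul_mem_posCone hk)
    (fun x hx => inv_pos.2 (hpos _ (inv_mem_posCone hx))) (fun _ hk _ => dualF_smul hhom hk),
    hdual]

theorem fderiv_fderiv_comp_inv_nonneg_iff (hf : ContDiffOn ℝ 2 f (posCone n)) :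
    (∀ x ∈ posCone n, ∀ v, 0 ≤ fderiv ℝ (fderiv ℝ fun z => f z⁻¹) x v v) ↔
      ∀ x ∈ posCone n, ∀ y, 0 ≤ inverseConcavityForm f x y := by
  have hessian : ∀ x ∈ posCone n, ∀ v, fderiv ℝ (fderiv ℝ fun z => f z⁻¹) x v v =
      inverseConcavityForm f x⁻¹ (-(x⁻¹ ^ 2 * v)) := fun x hx v =>
    fderiv_fderiv_comp_pi_inv (hf.contDiffAt (isOpen_posCone.mem_nhds (inv_mem_posCone hx)))
      (fun i => (hx i).ne') v
  constructor
  · intro h x hx y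
    have hy : -(x ^ 2 * -(x⁻¹ ^ 2 * y)) = y := by
      ext i
      have := (hx i).ne'
      simp only [Pi.pow_apply, Pi.neg_apply, Pi.mul_apply, Pi.inv_apply]
      field_simp
    have hxy := h x⁻¹ (inv_mem_posCone hx) (-(x⁻¹ ^ 2 * y))
    rwa [hessian _ (inv_mem_posCone hx), inv_inv, hy] at hxy
  · intro h x hx v
    rw [hessian x hx]
    exact h _ (inv_mem_posCone hx) _

theorem inverseConcavityForm_eq_sum (hf : ContDiffAt ℝ 2 f x) (y : Fin n → ℝ) :
    inverseConcavityForm f x y =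
      (∑ i, ∑ j, D2 n f x i j * y i * y j) + 2 * ∑ i, (D1 n f x i / x i) * (y i) ^ 2 := by
  have hD2 : ∀ i j, D2 n f x i j = fderiv ℝ (fderiv ℝ f) x (Pi.single j 1) (Pi.single i 1) :=
    fun i j => fderiv_fderiv_apply hf _ _
  have hfirst : fderiv ℝ f x (y ^ 2 / x) = ∑ i, (D1 n f x i / x i) * (y i) ^ 2 := by
    conv_lhs => rw [pi_eq_sum_univ' (y ^ 2 / x)]
    simp only [map_sum, map_smul, smul_eq_mul, Pi.div_apply, Pi.pow_apply, D1]
    exact Finset.sum_congr rfl fun i _ => by ring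
  have hsecond : fderiv ℝ (fderiv ℝ f) x y y = ∑ i, ∑ j, D2 n f x i j * y i * y j := by
    conv_lhs => rw [pi_eq_sum_univ' y]
    simp only [map_sum, map_smul, _root_.sum_apply, _root_.smul_apply, smul_eq_mul, hD2]
    exact Finset.sum_congr rfl fun i _ => by
      rw [Finset.mul_sum]
      exact Finset.sum_congr rfl fun j _ => by ring
  rw [inverseConcavityForm, hfirst, hsecond]

end PositiveCone

theorem inverse_concave_iff_matrix_nonneg_general (n : ℕ) (f : (Fin n → ℝ) → ℝ)
    (hf : ContDiffOn ℝ 2 f (posCone n)) (hpos : ∀ x ∈ posCone n, 0 < f x)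
    (hhom : ∀ k : ℝ, 0 < k → ∀ x ∈ posCone n, f (k • x) = k * f x) :
    ConcaveOn ℝ (posCone n) (dualF n f) ↔
      ∀ x ∈ posCone n, ∀ y : Fin n → ℝ,
        0 ≤ (∑ i, ∑ j, D2 n f x i j * y i * y j)
            + 2 * ∑ i, (D1 n f x i / x i) * (y i) ^ 2 := by
  calc ConcaveOn ℝ (posCone n) (dualF n f)
      ↔ ConvexOn ℝ (posCone n) fun x => f x⁻¹ := concaveOn_dualF_iff_convexOn_comp_inv hpos hhom
    _ ↔ ∀ x ∈ posCone n, ∀ v, 0 ≤ fderiv ℝ (fderiv ℝ fun z => f z⁻¹) x v v :=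
        convexOn_iff_fderiv_fderiv_nonneg isOpen_posCone convex_posCone
          (contDiffOn_comp_inv_posCone hf)
    _ ↔ ∀ x ∈ posCone n, ∀ y, 0 ≤ inverseConcavityForm f x y :=
        fderiv_fderiv_comp_inv_nonneg_iff hf
    _ ↔ _ := forall₂_congr fun x hx => forall_congr' fun y => by
        rw [inverseConcavityForm_eq_sum (hf.contDiffAt (isOpen_posCone.mem_nhds hx))]

/-- a smooth symmetric, positive, strictly increasing, 1-homogeneous `f` on Γ₊
is inverse concave iff the matrix `(f̈^{ij} + 2 ḟ^i x_i⁻¹ δ_{ij})` is positive semidefinite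
everywhere on Γ₊. -/
theorem inverse_concave_iff_matrix_nonneg (n : ℕ) (hn : 2 ≤ n) (f : (Fin n → ℝ) → ℝ)
    (hsmooth : ContDiffOn ℝ (⊤ : ℕ∞) f (posCone n))
    (hsym : ∀ σ : Equiv.Perm (Fin n), ∀ x ∈ posCone n, f (x ∘ σ) = f x)
    (hpos : ∀ x ∈ posCone n, 0 < f x)
    (hmono : ∀ x ∈ posCone n, ∀ i, 0 < D1 n f x i)
    (hhom : ∀ k : ℝ, 0 < k → ∀ x ∈ posCone n, f (k • x) = k * f x) :
    ConcaveOn ℝ (posCone n) (dualF n f) ↔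
      ∀ x ∈ posCone n, ∀ y : Fin n → ℝ,
        0 ≤ (∑ i, ∑ j, D2 n f x i j * y i * y j)
            + 2 * ∑ i, (D1 n f x i / x i) * (y i) ^ 2 :=
  inverse_concave_iff_matrix_nonneg_general n f
    (hsmooth.of_le (WithTop.coe_le_coe.2 le_top)) hpos hhom
end
end

section
/- Let n ≥ 2 and let f_* : Γ₊ → ℝ be a smooth symmetric function. Define F_* on the set of positive definite real symmetric n×n matrices by F_*(A) = f_*(λ₁(A), …, λₙ(A)), where λ₁(A), …, λₙ(A) are the eigenvalues of A (this is well defined since f_* is symmetric). Then F_* is concave on the convex cone of positive definite symmetric matrices if and only if f_* is concave on Γ₊. -/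
open Filter Topology Matrix

noncomputable section

/-- The matrix function F_*(A) = f_*(eigenvalues of A), defined on Hermitian (= real symmetric)
matrices and extended by 0 elsewhere. -/
def matrixFn (n : ℕ) (fstar : (Fin n → ℝ) → ℝ) (A : Matrix (Fin n) (Fin n) ℝ) : ℝ :=
  if h : A.IsHermitian then fstar h.eigenvalues else 0

/-! In any orthonormal basis, the diagonal of a Hermitian matrix `A` is the image of its eigenvalue
vector `λ(A)` under a doubly stochastic matrix (Schur). By Birkhoff's theorem that image is a
convex combination of rearrangements of `λ(A)`, so a symmetric concave function does not decrease
along it. In an eigenbasis of `C = aA + bB` the diagonal of `C` is `λ(C)`, and it is the same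
combination of the diagonals of `A` and `B`; so concavity of `f` on vectors gives concavity of
`f ∘ λ` on matrices. The converse is restriction to diagonal matrices. This is Davis's theorem. -/

section Rearrangement

lemma exists_equiv_comp_eq_of_map_univ_eq {α β γ : Type*} [Fintype α] [Fintype β]
    {f : α → γ} {g : β → γ}
    (h : Finset.univ.val.map f = Finset.univ.val.map g) : ∃ e : α ≃ β, g ∘ e = f := by
  classical
  have card_fiber_eq (c : γ) : Fintype.card {a // f a = c} = Fintype.card {b // g b = c} := by
    simpa only [Multiset.count_map, Fintype.card_subtype, Finset.card_def, Finset.filter_val,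
      eq_comm (a := c)] using congrArg (Multiset.count c) h
  let e (c : γ) : {a // f a = c} ≃ {b // g b = c} := Fintype.equivOfCardEq (card_fiber_eq c)
  exact ⟨Equiv.ofFiberEquiv e, funext (Equiv.ofFiberEquiv_map e)⟩

variable {R ι : Type*} [Field R] [LinearOrder R] [IsStrictOrderedRing R]
  [Fintype ι] [DecidableEq ι]

lemma exists_mulVec_eq_sum_smul_comp_perm {M : Matrix ι ι R} (hM : M ∈ doublyStochastic R ι) :
    ∃ w : Equiv.Perm ι → R, (∀ σ, 0 ≤ w σ) ∧ ∑ σ, w σ = 1 ∧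
      ∀ x : ι → R, M *ᵥ x = ∑ σ, w σ • (x ∘ σ) := by
  obtain ⟨w, w_nonneg, w_sum, rfl⟩ := exists_eq_sum_perm_of_mem_doublyStochastic hM
  refine ⟨w, w_nonneg, w_sum, fun x => ?_⟩
  simp only [sum_mulVec, smul_mulVec, permMatrix_mulVec]

variable {s : Set (ι → R)} {M : Matrix ι ι R} {x : ι → R}

lemma mulVec_mem_of_mem_doublyStochastic (hs : Convex R s)
    (hperm : ∀ σ : Equiv.Perm ι, x ∘ σ ∈ s) (hM : M ∈ doublyStochastic R ι) : M *ᵥ x ∈ s := by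
  obtain ⟨w, w_nonneg, w_sum, hw⟩ := exists_mulVec_eq_sum_smul_comp_perm hM
  rw [hw]
  exact hs.sum_mem (fun σ _ => w_nonneg σ) w_sum fun σ _ => hperm σ

lemma le_map_mulVec_of_mem_doublyStochastic {β : Type*} [AddCommGroup β]
    [PartialOrder β] [IsOrderedAddMonoid β] [Module R β] [IsStrictOrderedModule R β]
    {f : (ι → R) → β} (hf : ConcaveOn R s f) (hperm : ∀ σ : Equiv.Perm ι, x ∘ σ ∈ s)
    (hsymm : ∀ σ : Equiv.Perm ι, f (x ∘ σ) = f x) (hM : M ∈ doublyStochastic R ι) :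
    f x ≤ f (M *ᵥ x) := by
  obtain ⟨w, w_nonneg, w_sum, hw⟩ := exists_mulVec_eq_sum_smul_comp_perm hM
  calc f x = ∑ σ, w σ • f (x ∘ σ) := by
        simp only [hsymm, ← Finset.sum_smul, w_sum, one_smul]
    _ ≤ f (∑ σ, w σ • (x ∘ σ)) :=
        hf.le_map_sum (fun σ _ => w_nonneg σ) w_sum fun σ _ => hperm σ
    _ = f (M *ᵥ x) := by rw [hw]

end Rearrangement

section SchurDiagonal

variable {𝕜 ι : Type*} [RCLike 𝕜] [Fintype ι] [DecidableEq ι]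

lemma of_norm_sq_mem_doublyStochastic (U : unitaryGroup ι 𝕜) :
    (of fun i j => ‖U i j‖ ^ 2) ∈ doublyStochastic ℝ ι := by
  refine mem_doublyStochastic_iff_sum.2 ⟨fun i j => sq_nonneg _, fun i => ?_, fun j => ?_⟩
  · have row_unit := congrFun (congrFun (Unitary.coe_mul_star_self U) i) i
    simp only [mul_apply, Unitary.coe_star, star_apply, RCLike.star_def, RCLike.mul_conj,
      one_apply_eq] at row_unit
    exact_mod_cast row_unit
  · have col_unit := congrFun (congrFun (Unitary.coe_star_mul_self U) j) j
    simp only [mul_apply, star_apply, RCLike.star_def, RCLike.conj_mul, one_apply_eq] at col_unit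
    exact_mod_cast col_unit

/-- The real parts of the diagonal entries of `A` in the orthonormal basis formed by the columns
of `V`. For Hermitian `A` the diagonal is real, so nothing is lost. -/
def reDiag (V : unitaryGroup ι 𝕜) : Matrix ι ι 𝕜 →ₗ[ℝ] ι → ℝ where
  toFun A i := RCLike.re (Unitary.conjStarAlgAut 𝕜 _ (star V) A i i)
  map_add' A B := by ext i; simp only [map_add, Matrix.add_apply, Pi.add_apply]
  map_smul' r A := by
    ext i
    simp only [RCLike.real_smul_eq_coe_smul (K := 𝕜), map_smul, Matrix.smul_apply, Pi.smul_apply,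
      smul_eq_mul, RCLike.re_ofReal_mul, RingHom.id_apply]

lemma reDiag_apply (V : unitaryGroup ι 𝕜) (A : Matrix ι ι 𝕜) (i : ι) :
    reDiag V A i = RCLike.re (Unitary.conjStarAlgAut 𝕜 _ (star V) A i i) :=
  rfl

lemma reDiag_eigenvectorUnitary {A : Matrix ι ι 𝕜} (hA : A.IsHermitian) :
    reDiag hA.eigenvectorUnitary A = hA.eigenvalues := by
  ext i
  rw [reDiag_apply, hA.conjStarAlgAut_star_eigenvectorUnitary, diagonal_apply_eq,
    Function.comp_apply, RCLike.ofReal_re]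

lemma re_conjStarAlgAut_diagonal_apply_self (U : unitaryGroup ι 𝕜) (x : ι → ℝ) (i : ι) :
    RCLike.re (Unitary.conjStarAlgAut 𝕜 _ U (diagonal (RCLike.ofReal ∘ x)) i i) =
      ((of fun i j => ‖U i j‖ ^ 2) *ᵥ x) i := by
  rw [Unitary.conjStarAlgAut_apply, mul_apply]
  simp only [mul_diagonal, star_apply, mulVec, dotProduct, of_apply, map_sum, RCLike.star_def,
    Function.comp_apply]
  refine Finset.sum_congr rfl fun j _ => ?_
  rw [mul_right_comm, RCLike.mul_conj]
  norm_cast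

lemma exists_mem_doublyStochastic_reDiag_eq {A : Matrix ι ι 𝕜} (hA : A.IsHermitian)
    (V : unitaryGroup ι 𝕜) :
    ∃ M ∈ doublyStochastic ℝ ι, reDiag V A = M *ᵥ hA.eigenvalues := by
  refine ⟨_, of_norm_sq_mem_doublyStochastic (star V * hA.eigenvectorUnitary), funext fun i => ?_⟩
  rw [← re_conjStarAlgAut_diagonal_apply_self, Unitary.conjStarAlgAut_mul_apply,
    ← hA.spectral_theorem, reDiag_apply]

end SchurDiagonal

section RealDiagonal

variable {𝕜 ι : Type*} [RCLike 𝕜] [DecidableEq ι]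

variable (𝕜 ι) in
/-- Real diagonal matrices over `𝕜`, as a linear map. -/
def realDiagonal : (ι → ℝ) →ₗ[ℝ] Matrix ι ι 𝕜 :=
  diagonalLinearMap ι ℝ 𝕜 ∘ₗ (Algebra.linearMap ℝ 𝕜).compLeft ι

lemma realDiagonal_apply (x : ι → ℝ) :
    realDiagonal 𝕜 ι x = diagonal (RCLike.ofReal ∘ x) :=
  rfl

lemma isHermitian_realDiagonal (x : ι → ℝ) : (realDiagonal 𝕜 ι x).IsHermitian :=
  isHermitian_diagonal_of_self_adjoint _ <| funext fun i => RCLike.conj_ofReal (x i)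

lemma exists_perm_eigenvalues_realDiagonal_comp_eq [Fintype ι] (x : ι → ℝ) :
    ∃ σ : Equiv.Perm ι, (isHermitian_realDiagonal (𝕜 := 𝕜) x).eigenvalues ∘ σ = x := by
  have hx := isHermitian_realDiagonal (𝕜 := 𝕜) x
  have eigenvalues_eq : Finset.univ.val.map (RCLike.ofReal ∘ x : ι → 𝕜) =
      Finset.univ.val.map (RCLike.ofReal ∘ hx.eigenvalues) := by
    rw [← hx.roots_charpoly_eq_eigenvalues, realDiagonal_apply, charpoly_diagonal,
      Polynomial.roots_prod _ _ <|
        Finset.prod_ne_zero_iff.2 fun i _ => Polynomial.X_sub_C_ne_zero _]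
    simp only [Polynomial.roots_X_sub_C, Multiset.bind_singleton]
  obtain ⟨σ, hσ⟩ := exists_equiv_comp_eq_of_map_univ_eq eigenvalues_eq
  exact ⟨σ, RCLike.ofReal_injective.comp_left hσ⟩

end RealDiagonal

section SpectralFunction

variable {𝕜 ι β : Type*} [RCLike 𝕜] [Fintype ι] [DecidableEq ι]

variable (𝕜) in
/-- The set of Hermitian matrices whose eigenvalue vector lies in `s`. It is meant for `s`
invariant under permutations, so that the enumeration of the eigenvalues is irrelevant. -/
def spectralSet (s : Set (ι → ℝ)) : Set (Matrix ι ι 𝕜) :=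
  {A | ∃ hA : A.IsHermitian, hA.eigenvalues ∈ s}

/-- The function `A ↦ f (λ(A))` of a Hermitian matrix `A` with eigenvalue vector `λ(A)`, with
the junk value `0` on the other matrices. -/
def spectralFn [Zero β] (f : (ι → ℝ) → β) (A : Matrix ι ι 𝕜) : β :=
  open scoped Classical in if hA : A.IsHermitian then f hA.eigenvalues else 0

lemma spectralFn_of_isHermitian [Zero β] (f : (ι → ℝ) → β) {A : Matrix ι ι 𝕜}
    (hA : A.IsHermitian) : spectralFn f A = f hA.eigenvalues :=
  dif_pos hA

variable {s : Set (ι → ℝ)}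

lemma preimage_realDiagonal_spectralSet (hs : ∀ σ : Equiv.Perm ι, ∀ x ∈ s, x ∘ σ ∈ s) :
    realDiagonal 𝕜 ι ⁻¹' spectralSet 𝕜 s = s := by
  ext x
  obtain ⟨σ, hσ⟩ := exists_perm_eigenvalues_realDiagonal_comp_eq (𝕜 := 𝕜) x
  constructor
  · rintro ⟨_, hx⟩
    exact hσ ▸ hs σ _ hx
  · intro hx
    exact ⟨isHermitian_realDiagonal x, (Equiv.comp_symm_eq σ _ _).2 hσ.symm ▸ hs σ.symm x hx⟩

lemma spectralFn_realDiagonal [Zero β] {f : (ι → ℝ) → β} {x : ι → ℝ}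
    (hf : ∀ σ : Equiv.Perm ι, f (x ∘ σ) = f x) :
    spectralFn f (realDiagonal 𝕜 ι x) = f x := by
  obtain ⟨σ, hσ⟩ := exists_perm_eigenvalues_realDiagonal_comp_eq (𝕜 := 𝕜) x
  rw [spectralFn_of_isHermitian f (isHermitian_realDiagonal x),
    ← (Equiv.comp_symm_eq σ _ _).2 hσ.symm, hf]

lemma reDiag_mem_of_mem_spectralSet (hconv : Convex ℝ s)
    (hs : ∀ σ : Equiv.Perm ι, ∀ x ∈ s, x ∘ σ ∈ s)
    {A : Matrix ι ι 𝕜} (hA : A ∈ spectralSet 𝕜 s) (V : unitaryGroup ι 𝕜) :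
    reDiag V A ∈ s := by
  obtain ⟨hA, hmem⟩ := hA
  obtain ⟨M, hM, hMA⟩ := exists_mem_doublyStochastic_reDiag_eq hA V
  exact hMA ▸ mulVec_mem_of_mem_doublyStochastic hconv (fun σ => hs σ _ hmem) hM

lemma convex_spectralSet (hconv : Convex ℝ s) (hs : ∀ σ : Equiv.Perm ι, ∀ x ∈ s, x ∘ σ ∈ s) :
    Convex ℝ (spectralSet 𝕜 s) := by
  intro A hA B hB a b ha hb hab
  have hC : (a • A + b • B).IsHermitian := (hA.1.smul (.all a)).add (hB.1.smul (.all b))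
  refine ⟨hC, ?_⟩
  rw [← reDiag_eigenvectorUnitary hC, map_add, map_smul, map_smul]
  exact hconv (reDiag_mem_of_mem_spectralSet hconv hs hA _)
    (reDiag_mem_of_mem_spectralSet hconv hs hB _) ha hb hab

variable [AddCommGroup β] [PartialOrder β] [IsOrderedAddMonoid β] [Module ℝ β]
  [IsStrictOrderedModule ℝ β] {f : (ι → ℝ) → β}

lemma spectralFn_le_map_reDiag (hf : ConcaveOn ℝ s f)
    (hs : ∀ σ : Equiv.Perm ι, ∀ x ∈ s, x ∘ σ ∈ s)
    (hsymm : ∀ σ : Equiv.Perm ι, ∀ x ∈ s, f (x ∘ σ) = f x)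
    {A : Matrix ι ι 𝕜} (hA : A ∈ spectralSet 𝕜 s) (V : unitaryGroup ι 𝕜) :
    spectralFn f A ≤ f (reDiag V A) := by
  obtain ⟨hA, hmem⟩ := hA
  obtain ⟨M, hM, hMA⟩ := exists_mem_doublyStochastic_reDiag_eq hA V
  rw [spectralFn_of_isHermitian f hA, hMA]
  exact le_map_mulVec_of_mem_doublyStochastic hf (fun σ => hs σ _ hmem)
    (fun σ => hsymm σ _ hmem) hM

lemma concaveOn_spectralFn (hf : ConcaveOn ℝ s f)
    (hs : ∀ σ : Equiv.Perm ι, ∀ x ∈ s, x ∘ σ ∈ s)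
    (hsymm : ∀ σ : Equiv.Perm ι, ∀ x ∈ s, f (x ∘ σ) = f x) :
    ConcaveOn ℝ (spectralSet 𝕜 s) (spectralFn f) := by
  refine ⟨convex_spectralSet hf.1 hs, fun A hA B hB a b ha hb hab => ?_⟩
  obtain ⟨hC, -⟩ := convex_spectralSet hf.1 hs hA hB ha hb hab
  set V := hC.eigenvectorUnitary
  calc a • spectralFn f A + b • spectralFn f B
      ≤ a • f (reDiag V A) + b • f (reDiag V B) :=
        add_le_add
          (smul_le_smul_of_nonneg_left (spectralFn_le_map_reDiag hf hs hsymm hA V) ha)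
          (smul_le_smul_of_nonneg_left (spectralFn_le_map_reDiag hf hs hsymm hB V) hb)
    _ ≤ f (a • reDiag V A + b • reDiag V B) :=
        hf.2 (reDiag_mem_of_mem_spectralSet hf.1 hs hA V)
          (reDiag_mem_of_mem_spectralSet hf.1 hs hB V) ha hb hab
    _ = f (reDiag V (a • A + b • B)) := by rw [map_add, map_smul, map_smul]
    _ = spectralFn f (a • A + b • B) := by
        rw [reDiag_eigenvectorUnitary hC, spectralFn_of_isHermitian f hC]

theorem matrix_concave_iff_concave_general
    (hs : ∀ σ : Equiv.Perm ι, ∀ x ∈ s, x ∘ σ ∈ s)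
    (hsymm : ∀ σ : Equiv.Perm ι, ∀ x ∈ s, f (x ∘ σ) = f x) :
    ConcaveOn ℝ (spectralSet 𝕜 s) (spectralFn f) ↔ ConcaveOn ℝ s f := by
  refine ⟨fun hF => ?_, fun hf => concaveOn_spectralFn hf hs hsymm⟩
  have hcomp := hF.comp_linearMap (realDiagonal 𝕜 ι)
  rw [preimage_realDiagonal_spectralSet hs] at hcomp
  exact hcomp.congr fun x hx => spectralFn_realDiagonal fun σ => hsymm σ x hx

end SpectralFunction

lemma matrixFn_eq_spectralFn (n : ℕ) (f : (Fin n → ℝ) → ℝ) : matrixFn n f = spectralFn f := by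
  ext A
  unfold matrixFn spectralFn
  congr

lemma spectralSet_posCone (n : ℕ) :
    spectralSet ℝ (posCone n) = {A | A.IsSymm ∧ A.PosDef} := by
  ext A
  constructor
  · rintro ⟨hA, hpos⟩
    exact ⟨isHermitian_iff_isSymm.1 hA, hA.posDef_iff_eigenvalues_pos.2 hpos⟩
  · rintro ⟨-, hA⟩
    exact ⟨hA.isHermitian, hA.eigenvalues_pos⟩

/-- for a smooth symmetric `f_*` on Γ₊, the associated matrix function
`F_*(A) = f_*(λ(A))` is concave on the cone of positive definite symmetric matrices
iff `f_*` is concave on Γ₊. -/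
theorem matrix_concave_iff_concave (n : ℕ) (hn : 2 ≤ n) (fstar : (Fin n → ℝ) → ℝ)
    (hsmooth : ContDiffOn ℝ (⊤ : ℕ∞) fstar (posCone n))
    (hsym : ∀ σ : Equiv.Perm (Fin n), ∀ x ∈ posCone n, fstar (x ∘ σ) = fstar x) :
    ConcaveOn ℝ {A : Matrix (Fin n) (Fin n) ℝ | A.IsSymm ∧ A.PosDef}
        (matrixFn n fstar) ↔
      ConcaveOn ℝ (posCone n) fstar := by
  rw [matrixFn_eq_spectralFn, ← spectralSet_posCone]
  exact matrix_concave_iff_concave_general (fun σ _ hx i => hx (σ i)) hsym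
end
end

section
/- Let n ≥ 2 and let f : Γ₊ → ℝ be smooth, symmetric, convex, positively homogeneous of degree one, and normalized so that f(1, …, 1) = n. Then f(x) ≥ Σ_{i=1}^n x_i for every x ∈ Γ₊. -/
open Filter Topology Matrix

noncomputable section

/-!
Averaging a point over the rearrangements of its coordinates by a transitive permutation group
yields the diagonal point whose entries are all the mean. A convex sublevel set of a symmetric
function contains these rearrangements together with the point, hence also that diagonal point, so
`f` is at least its value there; homogeneity and the normalization identify this value with
the sum of the coordinates.
-/

open scoped BigOperators

section Symmetrization

variable {𝕜 E ι : Type*} [Fintype ι]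

theorem expect_mem_of_convex [Field 𝕜] [LinearOrder 𝕜] [IsStrictOrderedRing 𝕜]
    [AddCommGroup E] [Module 𝕜 E] [Module ℚ≥0 E] [Nonempty ι] {s : Set E} (hs : Convex 𝕜 s)
    {p : ι → E} (hp : ∀ i, p i ∈ s) : 𝔼 i, p i ∈ s := by
  have weights_sum_eq_one : ∑ _i : ι, (Fintype.card ι : 𝕜)⁻¹ = 1 := by simp
  simpa only [Finset.expect, Finset.card_univ, ← Finset.smul_sum,
    inv_natCast_smul_eq 𝕜 ℚ≥0] using
    hs.sum_mem (fun _ _ => by positivity) weights_sum_eq_one fun i _ => hp i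

theorem expect_smul_eq_expect (G : Type*) [Group G] [Fintype G] [MulAction G ι]
    [MulAction.IsPretransitive G ι] [AddCommMonoid E] [Module ℚ≥0 E] (x : ι → E) (i : ι) :
    𝔼 g : G, x (g • i) = 𝔼 j, x j := by
  have : Nonempty ι := ⟨i⟩
  have orbit_independent (j : ι) : 𝔼 g : G, x (g • j) = 𝔼 g : G, x (g • i) := by
    obtain ⟨h, rfl⟩ := MulAction.exists_smul_eq G i j
    exact Fintype.expect_equiv (Equiv.mulRight h) _ _ fun g => by
      rw [Equiv.coe_mulRight, mul_smul]
  calc 𝔼 g : G, x (g • i)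
      = 𝔼 j, 𝔼 g : G, x (g • j) := by
        simp only [orbit_independent, Fintype.expect_const]
    _ = 𝔼 g : G, 𝔼 j, x (g • j) := Finset.expect_comm _ _ _
    _ = 𝔼 _g : G, 𝔼 j, x j :=
        Finset.expect_congr rfl fun g _ => Fintype.expect_equiv (MulAction.toPerm g) _ _
          fun _ => rfl
    _ = 𝔼 j, x j := Fintype.expect_const _

theorem const_expect_mem_of_convex [Field 𝕜] [LinearOrder 𝕜] [IsStrictOrderedRing 𝕜]
    [AddCommGroup E] [Module 𝕜 E] [Module ℚ≥0 E] (G : Type*) [Group G] [Finite G]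
    [MulAction G ι] [MulAction.IsPretransitive G ι] {s : Set (ι → E)} (hs : Convex 𝕜 s)
    {x : ι → E} (hx : ∀ g : G, (fun i => x (g • i)) ∈ s) : Function.const ι (𝔼 j, x j) ∈ s := by
  have := Fintype.ofFinite G
  have symmetrization : 𝔼 g : G, (fun i => x (g • i)) = Function.const ι (𝔼 j, x j) := by
    funext i
    simpa [Finset.expect] using expect_smul_eq_expect G x i
  exact symmetrization ▸ expect_mem_of_convex hs hx

end Symmetrization

theorem convex_ge_sum_general {𝕜 ι : Type*} [Field 𝕜] [LinearOrder 𝕜] [IsStrictOrderedRing 𝕜]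
    [Fintype ι] (G : Type*) [Group G] [Finite G] [MulAction G ι] [MulAction.IsPretransitive G ι]
    {s : Set (ι → 𝕜)} (hs : ∀ g : G, ∀ x ∈ s, (fun i => x (g • i)) ∈ s)
    {f : (ι → 𝕜) → 𝕜} (hf : QuasiconvexOn 𝕜 s f)
    (hsym : ∀ g : G, ∀ x ∈ s, f (fun i => x (g • i)) = f x)
    (hdiag : ∀ a, Function.const ι a ∈ s → Fintype.card ι * a ≤ f (Function.const ι a)) :
    ∀ x ∈ s, ∑ i, x i ≤ f x := by
  intro x hx
  obtain ⟨mean_mem, mean_le⟩ : Function.const ι (𝔼 j, x j) ∈ {y ∈ s | f y ≤ f x} :=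
    const_expect_mem_of_convex G (hf (f x)) fun g => ⟨hs g x hx, (hsym g x hx).le⟩
  calc ∑ i, x i = Fintype.card ι * 𝔼 j, x j := (Fintype.card_mul_expect x).symm
    _ ≤ f (Function.const ι (𝔼 j, x j)) := hdiag _ mean_mem
    _ ≤ f x := mean_le

/-- a smooth, symmetric, convex, 1-homogeneous `f` on Γ₊ normalized by
`f(1,…,1) = n` satisfies `f(x) ≥ Σ_i x_i`. -/
theorem convex_ge_sum (n : ℕ) (hn : 2 ≤ n) (f : (Fin n → ℝ) → ℝ)
    (hsmooth : ContDiffOn ℝ (⊤ : ℕ∞) f (posCone n))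
    (hsym : ∀ σ : Equiv.Perm (Fin n), ∀ x ∈ posCone n, f (x ∘ σ) = f x)
    (hconv : ConvexOn ℝ (posCone n) f)
    (hhom : ∀ k : ℝ, 0 < k → ∀ x ∈ posCone n, f (k • x) = k * f x)
    (hnorm : f (fun _ => 1) = n) :
    ∀ x ∈ posCone n, (∑ i, x i) ≤ f x := by
  have : NeZero n := ⟨by lia⟩
  have homogeneous_diag (a : ℝ) (ha : Function.const (Fin n) a ∈ posCone n) :
      f (Function.const (Fin n) a) = n * a := by
    simpa only [Pi.smul_def, smul_eq_mul, mul_one, hnorm, mul_comm a (n : ℝ)] using!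
      hhom a (ha 0) (fun _ => 1) fun _ => one_pos
  exact convex_ge_sum_general (Equiv.Perm (Fin n)) (s := posCone n) (fun σ _ hx i => hx (σ i))
    hconv.quasiconvexOn hsym fun a ha => by rw [Fintype.card_fin, homogeneous_diag a ha]
end
end

section
/- Let n ≥ 2 and let g : Γ₊ → ℝ be continuous, strictly positive, positively homogeneous of degree one, and suppose g approaches zero on the boundary of Γ₊ (for every sequence τ^{(j)} ∈ Γ₊ converging to a point of the topological boundary of Γ₊, g(τ^{(j)}) → 0). Then for every C > 0 there exists C' > 0 such that every τ ∈ Γ₊ satisfying max_i τ_i ≤ C g(τ) also satisfies max_i τ_i ≤ C' min_i τ_i. -/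
open Filter Topology Matrix

noncomputable section

/-!
Dividing `τ` by its largest entry places it in the unit cube, and by homogeneity the hypothesis
`max τ ≤ C g(τ)` becomes `1 ≤ C g`. Since `g` vanishes at the frontier of the cone, the part of the
cube where `1 ≤ C g` has compact closure inside the cone, so its coordinates are bounded below by
some `ε > 0`; scaling back gives `ε max τ ≤ min τ`.
-/

theorem tendsto_nhdsWithin_of_forall_seq {X Y : Type*} [TopologicalSpace X]
    [FirstCountableTopology X] {s : Set X} {f : X → Y} {p : X} {l : Filter Y}
    (h : ∀ u : ℕ → X, (∀ j, u j ∈ s) → Tendsto u atTop (𝓝 p) →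
      Tendsto (fun j => f (u j)) atTop l) :
    Tendsto f (𝓝[s] p) l := by
  refine tendsto_of_seq_tendsto fun u hu => ?_
  obtain ⟨hup, hus⟩ := tendsto_nhdsWithin_iff.1 hu
  obtain ⟨N, hN⟩ := eventually_atTop.1 hus
  exact (tendsto_add_atTop_iff_nat N).1 <|
    h (fun j => u (j + N)) (fun j => hN _ (Nat.le_add_left N j))
      ((tendsto_add_atTop_iff_nat N).2 hup)

theorem closure_superlevel_subset_of_frontier {X α : Type*} [TopologicalSpace X] [Preorder α]
    {s : Set X} {f : X → α} {c : α} (h : ∀ p ∈ frontier s, ∀ᶠ x in 𝓝[s] p, f x < c) :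
    closure {x ∈ s | c ≤ f x} ⊆ s := by
  intro p hp
  by_contra hps
  have hpf : p ∈ frontier s :=
    ⟨closure_mono (Set.sep_subset _ _) hp, fun hpi => hps (interior_subset hpi)⟩
  obtain ⟨x, ⟨hxs, hcx⟩, hx⟩ :=
    ((mem_closure_iff_frequently.1 hp).and_eventually
      (eventually_nhdsWithin_iff.1 (h p hpf))).exists
  exact (hx hxs).not_ge hcx

theorem exists_gt_forall_le_of_isCompact {ι X α : Type*} [Finite ι] [TopologicalSpace X]
    [LinearOrder α] [TopologicalSpace α] [ClosedIicTopology α] [NoMaxOrder α] {K : Set X}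
    (hK : IsCompact K) {f : ι → X → α} (hf : ∀ i, ContinuousOn (f i) K) {a : α}
    (ha : ∀ x ∈ K, ∀ i, a < f i x) :
    ∃ b, a < b ∧ ∀ x ∈ K, ∀ i, b ≤ f i x := by
  have hcompact : IsCompact (⋃ i, f i '' K) :=
    isCompact_iUnion fun i => hK.image_of_continuousOn (hf i)
  have hgt : ∀ y ∈ ⋃ i, f i '' K, a < y := by
    intro y hy
    obtain ⟨i, x, hx, rfl⟩ := Set.mem_iUnion.1 hy
    exact ha x hx i
  obtain ⟨b, hab, hb⟩ := hcompact.exists_forall_le' continuousOn_id hgt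
  exact ⟨b, hab, fun x hx i => hb _ (Set.mem_iUnion.2 ⟨i, x, hx, rfl⟩)⟩

section Cone

variable {ι : Type*} [Finite ι] {s : Set (ι → ℝ)} {g : (ι → ℝ) → ℝ}

theorem exists_pos_forall_le_apply_of_superlevel {K : Set (ι → ℝ)} (hK : IsCompact K)
    (hs : ∀ x ∈ s, ∀ i, 0 < x i) {c : ℝ}
    (hg : ∀ p ∈ frontier s, ∀ᶠ x in 𝓝[s] p, g x < c) :
    ∃ ε > 0, ∀ x ∈ K, x ∈ s → c ≤ g x → ∀ i, ε ≤ x i := by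
  have hcompact : IsCompact (K ∩ closure {x ∈ s | c ≤ g x}) := hK.inter_right isClosed_closure
  obtain ⟨ε, hε, hle⟩ := exists_gt_forall_le_of_isCompact hcompact
    (f := fun i x => x i) (fun i => (continuous_apply i).continuousOn)
    (fun x hx => hs x (closure_superlevel_subset_of_frontier hg hx.2))
  exact ⟨ε, hε, fun x hxK hxs hcx => hle x ⟨hxK, subset_closure ⟨hxs, hcx⟩⟩⟩

theorem inv_iSup_smul_mem_Icc {x : ι → ℝ} (hx : 0 ≤ x) : (⨆ i, x i)⁻¹ • x ∈ Set.Icc 0 1 := by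
  have hsup : 0 ≤ ⨆ i, x i := Real.iSup_nonneg hx
  exact ⟨smul_nonneg (inv_nonneg.2 hsup) hx,
    fun i => inv_mul_le_one_of_le₀ (Finite.le_ciSup x i) hsup⟩

theorem pinching_from_boundary_vanishing_general [Nonempty ι]
    (hs : ∀ x ∈ s, ∀ i, 0 < x i) (hsmul : ∀ k : ℝ, 0 < k → ∀ x ∈ s, k • x ∈ s)
    (hhom : ∀ k : ℝ, 0 < k → ∀ x ∈ s, g (k • x) = k * g x)
    (hbdry : ∀ p ∈ frontier s, Tendsto g (𝓝[s] p) (𝓝 0)) (C : ℝ) :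
    ∃ C' : ℝ, 0 < C' ∧
      ∀ τ ∈ s, (⨆ i, τ i) ≤ C * g τ → (⨆ i, τ i) ≤ C' * ⨅ i, τ i := by
  have hsmall : ∀ p ∈ frontier s, ∀ᶠ x in 𝓝[s] p, C * g x < 1 := fun p hp =>
    ((hbdry p hp).const_mul C).eventually_lt_const (by simp only [mul_zero, zero_lt_one])
  obtain ⟨ε, hε, hle⟩ :=
    exists_pos_forall_le_apply_of_superlevel (K := Set.Icc 0 1) isCompact_Icc hs hsmall
  refine ⟨ε⁻¹, inv_pos.2 hε, fun τ hτ hmax => ?_⟩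
  set M := ⨆ i, τ i
  have hM : 0 < M := (hs τ hτ (Classical.arbitrary ι)).trans_le (Finite.le_ciSup τ _)
  have hlevel : 1 ≤ C * g (M⁻¹ • τ) := by
    rwa [hhom _ (inv_pos.2 hM) τ hτ, mul_left_comm, le_inv_mul_iff₀ hM, mul_one]
  have hcoord : ∀ i, ε ≤ M⁻¹ * τ i :=
    hle _ (inv_iSup_smul_mem_Icc fun i => (hs τ hτ i).le) (hsmul _ (inv_pos.2 hM) τ hτ) hlevel
  have hscaled : ∀ i, ε * M ≤ τ i := fun i =>
    mul_comm M ε ▸ (le_inv_mul_iff₀ hM).1 (hcoord i)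
  exact (le_inv_mul_iff₀ hε).2 (le_ciInf hscaled)

end Cone

/-- if `g` is continuous, positive, 1-homogeneous on Γ₊ and approaches zero on the
boundary of Γ₊, then for every `C > 0` there is `C' > 0` such that any `τ ∈ Γ₊` with
`max_i τ_i ≤ C g(τ)` satisfies `max_i τ_i ≤ C' min_i τ_i`. -/
theorem pinching_from_boundary_vanishing (n : ℕ) (hn : 2 ≤ n) (g : (Fin n → ℝ) → ℝ)
    (hcont : ContinuousOn g (posCone n))
    (hpos : ∀ x ∈ posCone n, 0 < g x)
    (hhom : ∀ k : ℝ, 0 < k → ∀ x ∈ posCone n, g (k • x) = k * g x)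
    (hbdry : ∀ (τ : ℕ → Fin n → ℝ) (p : Fin n → ℝ), (∀ j, τ j ∈ posCone n) →
      p ∈ frontier (posCone n) → Tendsto τ atTop (𝓝 p) →
      Tendsto (fun j => g (τ j)) atTop (𝓝 0)) :
    ∀ C : ℝ, 0 < C → ∃ C' : ℝ, 0 < C' ∧
      ∀ τ ∈ posCone n, (⨆ i, τ i) ≤ C * g τ → (⨆ i, τ i) ≤ C' * ⨅ i, τ i := by
  have : NeZero n := ⟨by omega⟩
  exact fun C _ => pinching_from_boundary_vanishing_general (fun _ hx => hx)
    (fun _ hk _ hx i => mul_pos hk (hx i)) hhom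
    (fun p hp => tendsto_nhdsWithin_of_forall_seq fun τ hτ hlim => hbdry τ p hτ hp hlim) C
end
end

section
/- Let n ≥ 2 and let f : Γ₊ → (0,∞) be continuous, symmetric, strictly increasing in each argument, positively homogeneous of degree one, and suppose its dual f_* approaches zero on the boundary of Γ₊ (f_*(z^{(j)}) → 0 for every sequence z^{(j)} ∈ Γ₊ converging to a point of the boundary of Γ₊). Then for every C > 0 there exists C' > 0 such that every κ ∈ Γ₊ satisfying min_i κ_i ≥ C f(κ) also satisfies max_i κ_i ≤ C' min_i κ_i. -/
open Filter Topology Matrix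

noncomputable section

/-!
Let `w_M` be the vector with `i`-th entry `M` and all other entries `1`, and let `m = min κ`. If
`κ i ≥ M * m` then `m • w_M ≤ κ`, so monotonicity and homogeneity give `m * f w_M ≤ f κ ≤ m / C`.
Hence `κ i < M * m` once `f w_M > 1 / C`. Such an `M` exists because `(f w_M)⁻¹` is the value of
`f_*` at `(1, …, M⁻¹, …, 1)`, which tends to a boundary point of the cone as `M → ∞`.
-/

theorem tendsto_nhdsWithin_of_seq_tendsto {X Y : Type*} [TopologicalSpace X]
    [FirstCountableTopology X] {g : X → Y} {s : Set X} {a : X} {l : Filter Y}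
    (h : ∀ z : ℕ → X, (∀ j, z j ∈ s) → Tendsto z atTop (𝓝 a) → Tendsto (g ∘ z) atTop l) :
    Tendsto g (𝓝[s] a) l := by
  refine tendsto_of_seq_tendsto fun u hu => ?_
  obtain ⟨hua, hus⟩ := tendsto_nhdsWithin_iff.1 hu
  obtain ⟨N, hN⟩ := eventually_atTop.1 hus
  have hshift : Tendsto (fun j => u (j + N)) atTop (𝓝 a) := (tendsto_add_atTop_iff_nat N).2 hua
  exact (tendsto_add_atTop_iff_nat N).1 (h _ (fun j => hN _ (Nat.le_add_left N j)) hshift)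

section

variable {n : ℕ} {f : (Fin n → ℝ) → ℝ}

theorem update_one_mem_posCone (i : Fin n) {t : ℝ} (ht : 0 < t) :
    Function.update (1 : Fin n → ℝ) i t ∈ posCone n := by
  intro k
  rcases eq_or_ne k i with rfl | hk
  · simpa using ht
  · simp [hk]

theorem tendsto_update_one_inv_atTop (i : Fin n) :
    Tendsto (fun t : ℝ => Function.update (1 : Fin n → ℝ) i t⁻¹) atTop
      (𝓝[posCone n] Function.update 1 i 0) :=
  tendsto_nhdsWithin_iff.2
    ⟨tendsto_const_nhds.update i tendsto_inv_atTop_zero,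
      (eventually_gt_atTop 0).mono fun _ ht => update_one_mem_posCone i (inv_pos.2 ht)⟩

theorem update_one_zero_mem_frontier_posCone (i : Fin n) :
    Function.update (1 : Fin n → ℝ) i 0 ∈ frontier (posCone n) := by
  refine ⟨mem_closure_iff_nhdsWithin_neBot.2 (tendsto_update_one_inv_atTop i).neBot, fun h => ?_⟩
  simpa using interior_subset h i

theorem dualF_inv (x : Fin n → ℝ) : dualF n f x⁻¹ = (f x)⁻¹ := by
  simp [dualF]

theorem tendsto_apply_update_one_atTop (hpos : ∀ x ∈ posCone n, 0 < f x) {i : Fin n}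
    (hdual : Tendsto (dualF n f) (𝓝[posCone n] Function.update 1 i 0) (𝓝 0)) :
    Tendsto (fun t : ℝ => f (Function.update 1 i t)) atTop atTop := by
  have hdual_path (t : ℝ) :
      dualF n f (Function.update 1 i t⁻¹) = (f (Function.update 1 i t))⁻¹ := by
    rw [← dualF_inv, ← Function.update_inv, inv_one]
  have hinv : Tendsto (fun t : ℝ => (f (Function.update 1 i t))⁻¹) atTop (𝓝[>] 0) :=
    tendsto_nhdsWithin_iff.2
      ⟨(hdual.comp (tendsto_update_one_inv_atTop i)).congr hdual_path,
        (eventually_gt_atTop 0).mono fun _ ht =>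
          inv_pos.2 (hpos _ (update_one_mem_posCone i ht))⟩
  exact hinv.inv_tendsto_nhdsGT_zero.congr fun _ => inv_inv _

theorem mul_apply_update_one_le (hmono : MonotoneOn f (posCone n))
    (hhom : ∀ k : ℝ, 0 < k → ∀ x ∈ posCone n, f (k • x) = k * f x)
    {κ : Fin n → ℝ} {m M : ℝ} {i : Fin n} (hm : 0 < m) (hM : 0 < M)
    (hmκ : ∀ k, m ≤ κ k) (hi : M * m ≤ κ i) :
    m * f (Function.update 1 i M) ≤ f κ := by
  have hw : Function.update (1 : Fin n → ℝ) i M ∈ posCone n := update_one_mem_posCone i hM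
  have hle : m • Function.update (1 : Fin n → ℝ) i M ≤ κ := by
    intro k
    rcases eq_or_ne k i with rfl | hk
    · simpa [mul_comm] using hi
    · simpa [hk] using hmκ k
  calc m * f (Function.update 1 i M)
    _ = f (m • Function.update (1 : Fin n → ℝ) i M) := (hhom m hm _ hw).symm
    _ ≤ f κ := hmono (fun k => mul_pos hm (hw k)) (fun k => hm.trans_le (hmκ k)) hle

theorem lt_mul_of_inv_lt_apply_update_one (hmono : MonotoneOn f (posCone n))
    (hhom : ∀ k : ℝ, 0 < k → ∀ x ∈ posCone n, f (k • x) = k * f x)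
    {κ : Fin n → ℝ} {C m M : ℝ} {i : Fin n} (hC : 0 < C) (hm : 0 < m) (hM : 0 < M)
    (hmκ : ∀ k, m ≤ κ k) (hpinch : C * f κ ≤ m)
    (hfM : C⁻¹ < f (Function.update 1 i M)) :
    κ i < M * m := by
  by_contra! hi
  have hlt : m < C * f κ :=
    calc m = C * (m * C⁻¹) := by field_simp
      _ < C * (m * f (Function.update 1 i M)) := by gcongr
      _ ≤ C * f κ := by gcongr; exact mul_apply_update_one_le hmono hhom hm hM hmκ hi
  exact hlt.not_ge hpinch

end

theorem pinching_estimate_analytic_general {n : ℕ} [NeZero n] {f : (Fin n → ℝ) → ℝ}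
    (hpos : ∀ x ∈ posCone n, 0 < f x) (hmono : MonotoneOn f (posCone n))
    (hhom : ∀ k : ℝ, 0 < k → ∀ x ∈ posCone n, f (k • x) = k * f x)
    (hdual : ∀ p ∈ frontier (posCone n), Tendsto (dualF n f) (𝓝[posCone n] p) (𝓝 0))
    {C : ℝ} (hC : 0 < C) :
    ∃ C' : ℝ, 0 < C' ∧
      ∀ κ ∈ posCone n, C * f κ ≤ (⨅ i, κ i) → (⨆ i, κ i) ≤ C' * ⨅ i, κ i := by
  have hlarge : ∀ᶠ M : ℝ in atTop, ∀ i : Fin n, C⁻¹ < f (Function.update 1 i M) :=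
    eventually_all.2 fun i =>
      (tendsto_apply_update_one_atTop hpos
        (hdual _ (update_one_zero_mem_frontier_posCone i))).eventually_gt_atTop C⁻¹
  obtain ⟨M, hfM, hM⟩ := (hlarge.and (eventually_gt_atTop 0)).exists
  refine ⟨M, hM, fun κ hκ hpinch => ciSup_le fun i => ?_⟩
  have hmin_pos : 0 < ⨅ k, κ k := by
    obtain ⟨k, hk⟩ := exists_eq_ciInf_of_finite (f := κ)
    exact hk ▸ hκ k
  have hmin_le (k : Fin n) : (⨅ k, κ k) ≤ κ k := ciInf_le (Set.finite_range κ).bddBelow k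
  exact (lt_mul_of_inv_lt_apply_update_one hmono hhom hC hmin_pos hM hmin_le hpinch (hfM i)).le

/-- if `f` is continuous, positive, symmetric, strictly increasing in each
argument and 1-homogeneous on Γ₊, and its dual `f_*` approaches zero on the boundary of Γ₊,
then for every `C > 0` there is `C' > 0` such that any `κ ∈ Γ₊` with `min_i κ_i ≥ C f(κ)`
satisfies `max_i κ_i ≤ C' min_i κ_i`. -/
theorem pinching_estimate_analytic (n : ℕ) (hn : 2 ≤ n) (f : (Fin n → ℝ) → ℝ)
    (hcont : ContinuousOn f (posCone n))
    (hpos : ∀ x ∈ posCone n, 0 < f x)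
    (hsym : ∀ σ : Equiv.Perm (Fin n), ∀ x ∈ posCone n, f (x ∘ σ) = f x)
    (hmono : ∀ x ∈ posCone n, ∀ y ∈ posCone n, (∀ i, x i ≤ y i) → x ≠ y → f x < f y)
    (hhom : ∀ k : ℝ, 0 < k → ∀ x ∈ posCone n, f (k • x) = k * f x)
    (hbdry : ∀ (z : ℕ → Fin n → ℝ) (p : Fin n → ℝ), (∀ j, z j ∈ posCone n) →
      p ∈ frontier (posCone n) → Tendsto z atTop (𝓝 p) →
      Tendsto (fun j => dualF n f (z j)) atTop (𝓝 0)) :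
    ∀ C : ℝ, 0 < C → ∃ C' : ℝ, 0 < C' ∧
      ∀ κ ∈ posCone n, C * f κ ≤ (⨅ i, κ i) → (⨆ i, κ i) ≤ C' * ⨅ i, κ i := by
  have : NeZero n := ⟨by omega⟩
  exact fun C hC => pinching_estimate_analytic_general hpos
    (StrictMonoOn.monotoneOn fun x hx y hy hxy => hmono x hx y hy hxy.le hxy.ne) hhom
    (fun p hp => tendsto_nhdsWithin_of_seq_tendsto fun z hz => hbdry z p hz hp) hC
end
end
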